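/- arXiv:2509.18931 — 2 statements merged into one kernel-verified Lean document; each statement's English description precedes it below -/
import Mathlib

section
/- As n → ∞, the pair sum over pairs sharing many edges vanishes: Σ_{s=⌈0.99n⌉}^{n−2} Σ_{g=1}^{min{s+1, ⌊(n−s)/2⌋}} c_{s,g} → 0. -/
open MeasureTheory Filter

namespace RandomHypercube

/-- Index of a (potential) hypercube edge: the lower endpoint `A` together with the
direction `i` that is added, representing the edge from `A` to `A ∪ {i}`. -/
abbrev EdgeIdx (n : ℕ) := Finset (Fin n) × Fin n

/-- The sample space: an i.i.d. Uniform[0,1] weight for each edge index. -/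
abbrev CubeOmega (n : ℕ) := EdgeIdx n → ℝ

/-- The product of uniform measures on [0,1], one for each edge. -/
noncomputable def cubeMeasure (n : ℕ) : Measure (CubeOmega n) :=
  Measure.pi fun _ => (volume : Measure ℝ).restrict (Set.Icc 0 1)

/-- The vertex visited by the direct path associated to the permutation `σ`
just before taking its `j`-th step: the image under `σ` of `{0, …, j-1}`. -/
def initSeg (n : ℕ) (σ : Equiv.Perm (Fin n)) (j : Fin n) : Finset (Fin n) :=
  (Finset.univ.filter fun i => i < j).image σ

/-- The edge used in the `j`-th step of the direct path associated to `σ`. -/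
def pathEdge (n : ℕ) (σ : Equiv.Perm (Fin n)) (j : Fin n) : EdgeIdx n :=
  (initSeg n σ j, σ j)

/-- The direct path associated to `σ` is accessible if its successive edge
weights are strictly increasing. -/
def Accessible (n : ℕ) (σ : Equiv.Perm (Fin n)) (ω : CubeOmega n) : Prop :=
  StrictMono fun j : Fin n => ω (pathEdge n σ j)

/-- The number of accessible direct paths from `∅` to `[n]`. -/
noncomputable def X (n : ℕ) (ω : CubeOmega n) : ℕ :=
  Nat.card {σ : Equiv.Perm (Fin n) // Accessible n σ ω}


/-- The set of steps `j` at which the direct paths of `σ` and `σ'` use the same edge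
(shared edges necessarily occur at the same level in both paths). -/
def sharedSteps (n : ℕ) (σ σ' : Equiv.Perm (Fin n)) : Finset (Fin n) :=
  Finset.univ.filter fun j => pathEdge n σ j = pathEdge n σ' j

/-- Given the sorted list `l` of steps (levels) of the shared edges, the gap vector:
the number of edges before the first shared edge, strictly between consecutive shared
edges, and after the last shared edge. -/
def gapsOfList (n : ℕ) (l : List ℕ) : List ℕ :=
  List.zipWith (fun a b => b - a) (0 :: l.map (· + 1)) (l ++ [n])

/-- The gap vector of the direct path of `σ'` relative to that of `σ`. -/
def gapVector (n : ℕ) (σ σ' : Equiv.Perm (Fin n)) : List ℕ :=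
  gapsOfList n (((sharedSteps n σ σ').sort (· ≤ ·)).map Fin.val)

/-- The number of (nontrivial) gaps between the direct paths of `σ` and `σ'`:
the number of nonzero entries of the gap vector. -/
def numGaps (n : ℕ) (σ σ' : Equiv.Perm (Fin n)) : ℕ :=
  ((gapVector n σ σ').filter (· != 0)).length

/-- The probability that the direct paths of `σ` and `σ'` are both accessible. -/
noncomputable def pairProb (n : ℕ) (σ σ' : Equiv.Perm (Fin n)) : ℝ :=
  (cubeMeasure n {ω | Accessible n σ ω ∧ Accessible n σ' ω}).toReal

/-- `c n s g`: the sum, over all ordered pairs of direct paths sharing exactly `s`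
edges with `g` gaps, of the probability that both paths are accessible. -/
noncomputable def c (n s g : ℕ) : ℝ :=
  ∑ p ∈ Finset.univ.filter
      (fun p : Equiv.Perm (Fin n) × Equiv.Perm (Fin n) =>
        (sharedSteps n p.1 p.2).card = s ∧ numGaps n p.1 p.2 = g),
    pairProb n p.1 p.2

/-- `w m`: the number of direct paths from `∅` to `[m]` in the `m`-dimensional hypercube
that are edge-disjoint from the canonical path (the identity permutation). -/
noncomputable def w (m : ℕ) : ℕ :=
  Nat.card {σ : Equiv.Perm (Fin m) // sharedSteps m σ 1 = ∅}

end RandomHypercube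

/-!
By symmetry one path may be taken canonical, so a pair of paths amounts to a permutation `τ` of
`Fin n`; let `m = n - s` be the number of steps at which the two paths use different edges. Let
`N` be the number of such `τ`.

The path of `τ` meets the canonical one at level `k` exactly when `τ` preserves `{0, …, k - 1}`,
and the step at level `j` is shared exactly when both `j` and `j + 1` are such *cuts*. Hence a cut
at an unshared step is followed by an unshared step that is not a cut, so at most half of the
unshared steps are cuts. To reconstruct `τ` it suffices to know the positions of the unshared cuts
(`n` choices each) and, at the other unshared steps, the rank of the image among the unshared steps
(`m` choices each): every other unshared step follows the previous one immediately, and the images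
of the cuts are then forced. Optimising a weighted count of these codes gives `N² ≤ (4mn)^m`.

Two such paths involve `n + m` edges, whose weights are exchangeable and almost surely distinct. Of
the `(n + m)!` orderings at most `4^m` make both paths increasing, because such an ordering is
determined by how the two lists of `m` unshared edges are shuffled. Altogether the pairs with `m`
unshared edges contribute at most `n! N 4^m / (n + m)! ≤ (8 √(m / n))^m`. As `m` ranges over
`2 ≤ m ≤ n / 100` these terms are bounded by `100 / n` times a convergent series.
-/

namespace RandomHypercube

open Finset ProbabilityTheory

section Permutations

theorem perm_eq_one_of_forall_le {α : Type*} [PartialOrder α] [Finite α] {π : Equiv.Perm α}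
    (h : ∀ a, a ≤ π a) : π = 1 := by
  ext a
  obtain ⟨k, hk⟩ : ∃ k, orderOf π = k + 1 := Nat.exists_eq_succ_of_ne_zero (orderOf_pos π).ne'
  have hπ : (π ^ k) (π a) = a := by
    rw [← Equiv.Perm.mul_apply, ← pow_succ, ← hk, pow_orderOf_eq_one, Equiv.Perm.one_apply]
  have hle : π a ≤ (π ^ k) (π a) := by
    rw [← Equiv.Perm.iterate_eq_pow]
    exact Function.id_le_iterate_of_id_le (show id ≤ ⇑π from h) k (π a)
  exact (hle.trans_eq hπ).antisymm (h a)

variable {n m : ℕ}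

/-- A level `k` at which the direct path of `τ` visits the same vertex `{0, …, k - 1}` as the
canonical path, i.e. a point at which the permutation `τ` decomposes. -/
def IsCut (τ : Equiv.Perm (Fin n)) (k : ℕ) : Prop :=
  ∀ i : Fin n, (i : ℕ) < k → (τ i : ℕ) < k

/-- The steps at which the direct path of `τ` does not follow the canonical path. -/
def unsharedSteps (τ : Equiv.Perm (Fin n)) : Finset (Fin n) :=
  (sharedSteps n 1 τ)ᶜ

variable {τ : Equiv.Perm (Fin n)}

theorem IsCut.apply_lt_iff {k : ℕ} (h : IsCut τ k) (i : Fin n) : (τ i : ℕ) < k ↔ (i : ℕ) < k := by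
  refine ⟨fun hi ↦ ?_, h i⟩
  simpa using Equiv.Perm.perm_symm_mapsTo_of_mapsTo (s := {i : Fin n | (i : ℕ) < k}) τ h hi

theorem IsCut.succ_iff {j : Fin n} (h : IsCut τ j) : IsCut τ (j + 1) ↔ τ j = j := by
  have hj : ¬(τ j : ℕ) < j := by simp [h.apply_lt_iff]
  refine ⟨fun h' ↦ ?_, fun hfix i hi ↦ ?_⟩
  · have := h' j (by omega)
    omega
  · obtain hlt | rfl : (i : ℕ) < j ∨ i = j := by omega
    · have := h i hlt
      omega
    · simp [hfix]

theorem IsCut.of_le {k : ℕ} (h : n ≤ k) : IsCut τ k := fun i _ ↦ (τ i).isLt.trans_le h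

theorem initSeg_one_eq_iff {j : Fin n} : initSeg n 1 j = initSeg n τ j ↔ IsCut τ j := by
  constructor
  · intro h i hi
    have hmem : τ i ∈ initSeg n 1 j := h ▸ mem_image_of_mem τ (by simpa using hi)
    simpa [initSeg] using hmem
  · intro h
    refine (eq_of_subset_of_card_le (fun a ha ↦ ?_) ?_).symm
    · obtain ⟨i, hi, rfl⟩ := mem_image.1 ha
      simpa [initSeg] using h i (by simpa using hi)
    · simp [initSeg, card_image_of_injective _ τ.injective]

theorem mem_unsharedSteps {j : Fin n} :
    j ∈ unsharedSteps τ ↔ ¬(IsCut τ j ∧ IsCut τ (j + 1)) := by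
  have : j ∈ sharedSteps n 1 τ ↔ IsCut τ j ∧ τ j = j := by
    rw [sharedSteps, mem_filter_univ, pathEdge, pathEdge, Prod.mk.injEq, initSeg_one_eq_iff,
      Equiv.Perm.one_apply, eq_comm (a := j)]
  rw [unsharedSteps, mem_compl, this, and_congr_right IsCut.succ_iff]

theorem mem_unsharedSteps_of_not_isCut {j : Fin n} (h : ¬IsCut τ j) : j ∈ unsharedSteps τ :=
  mem_unsharedSteps.2 fun hj ↦ h hj.1

theorem apply_eq_self_of_notMem_unsharedSteps {j : Fin n} (h : j ∉ unsharedSteps τ) : τ j = j := by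
  obtain ⟨h₀, h₁⟩ := not_not.1 (mem_unsharedSteps.not.1 h)
  exact h₀.succ_iff.1 h₁

theorem apply_mem_unsharedSteps {j : Fin n} (h : j ∈ unsharedSteps τ) : τ j ∈ unsharedSteps τ := by
  by_contra hj
  exact hj ((τ.injective (apply_eq_self_of_notMem_unsharedSteps hj)).symm ▸ h)

theorem exists_mem_unsharedSteps_succ_eq {j : Fin n} (h : ¬IsCut τ j) :
    ∃ k ∈ unsharedSteps τ, (k : ℕ) + 1 = j := by
  have hj : (j : ℕ) ≠ 0 := fun h0 ↦ h fun i hi ↦ by omega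
  refine ⟨⟨j - 1, by omega⟩, mem_unsharedSteps.2 fun hk ↦ h ?_,
    Nat.sub_add_cancel (Nat.pos_of_ne_zero hj)⟩
  simpa [Nat.sub_add_cancel (Nat.pos_of_ne_zero hj)] using hk.2

theorem exists_not_isCut_eq_succ {j : Fin n} (h : j ∈ unsharedSteps τ) (hj : IsCut τ j) :
    ∃ k : Fin n, ¬IsCut τ k ∧ (k : ℕ) = j + 1 := by
  have hsucc : ¬IsCut τ (j + 1) := fun h' ↦ mem_unsharedSteps.1 h ⟨hj, h'⟩
  exact ⟨⟨j + 1, not_le.1 fun hle ↦ hsucc (.of_le hle)⟩, hsucc, rfl⟩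

open Classical in
theorem card_unsharedSteps_le_two_mul_card_not_isCut (τ : Equiv.Perm (Fin n)) :
    #(unsharedSteps τ) ≤ 2 * #{j ∈ unsharedSteps τ | ¬IsCut τ (j : Fin n)} := by
  have hcut : #{j ∈ unsharedSteps τ | IsCut τ (j : Fin n)} ≤
      #{j ∈ unsharedSteps τ | ¬IsCut τ (j : Fin n)} := by
    have hex : ∀ j : Fin n, j ∈ (unsharedSteps τ).filter (fun j : Fin n ↦ IsCut τ j) →
        ∃ k : Fin n, ¬IsCut τ k ∧ (k : ℕ) = j + 1 := fun j hj ↦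
      exists_not_isCut_eq_succ (mem_filter.1 hj).1 (mem_filter.1 hj).2
    choose! next hnext hval using hex
    refine card_le_card_of_injOn next (fun j hj ↦ ?_) fun i hi j hj hij ↦ ?_
    · exact mem_filter.2 ⟨mem_unsharedSteps_of_not_isCut (hnext j hj), hnext j hj⟩
    · have hi' := hval i hi
      have hj' := hval j hj
      rw [hij] at hi'
      omega
  have hsplit := card_filter_add_card_filter_not (s := unsharedSteps τ) (fun j ↦ IsCut τ j)
  omega

theorem perm_eq_of_eqOn_not_isCut {τ' : Equiv.Perm (Fin n)}
    (hU : unsharedSteps τ = unsharedSteps τ')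
    (h : ∀ j ∈ unsharedSteps τ, IsCut τ j ∧ IsCut τ' j ∨ τ j = τ' j) : τ = τ' := by
  suffices τ⁻¹ * τ' = 1 from inv_mul_eq_one.1 this
  -- If `j` is a cut for both, then `τ' j` and hence `τ⁻¹ (τ' j)` lie at or above `j`; elsewhere the
  -- two permutations agree. So `τ⁻¹ * τ'` never decreases.
  refine perm_eq_one_of_forall_le fun j ↦ ?_
  rw [Equiv.Perm.mul_apply]
  by_cases hj : j ∈ unsharedSteps τ
  · obtain ⟨hcut, hcut'⟩ | heq := h j hj
    · rw [Fin.le_def, ← not_lt, ← hcut.apply_lt_iff, ← Equiv.Perm.mul_apply, mul_inv_cancel,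
        Equiv.Perm.one_apply, hcut'.apply_lt_iff]
      exact lt_irrefl _
    · simp [← heq]
  · have hfix := apply_eq_self_of_notMem_unsharedSteps hj
    have hfix' := apply_eq_self_of_notMem_unsharedSteps (hU ▸ hj)
    rw [hfix', Equiv.Perm.inv_eq_iff_eq.2 hfix.symm]

/-- The increasing enumeration of the unshared steps. -/
noncomputable def unsharedEnum (τ : {τ : Equiv.Perm (Fin n) // #(unsharedSteps τ) = m}) :
    Fin m ≃o unsharedSteps τ.1 :=
  (unsharedSteps τ.1).orderIsoOfFin τ.2

open Classical in
/-- An encoding of a permutation with `m` unshared steps, used for counting. The `i`-th unshared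
step `j` is recorded as `j` itself if `j` is a cut, and as the rank of `τ j` among the unshared
steps otherwise. -/
noncomputable def cutCode (τ : {τ : Equiv.Perm (Fin n) // #(unsharedSteps τ) = m}) (i : Fin m) :
    Fin n ⊕ Fin m :=
  if IsCut τ.1 (unsharedEnum τ i : Fin n) then .inl (unsharedEnum τ i)
  else .inr ((unsharedEnum τ).symm ⟨τ.1 (unsharedEnum τ i),
    apply_mem_unsharedSteps (unsharedEnum τ i).2⟩)

variable {σ τ : {τ : Equiv.Perm (Fin n) // #(unsharedSteps τ) = m}}

theorem image_unsharedEnum (τ : {τ : Equiv.Perm (Fin n) // #(unsharedSteps τ) = m}) :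
    univ.image (fun i ↦ (unsharedEnum τ i : Fin n)) = unsharedSteps τ.1 := by
  ext j
  simp only [mem_image, mem_univ, true_and]
  refine ⟨fun ⟨i, hi⟩ ↦ hi ▸ (unsharedEnum τ i).2, fun hj ↦ ⟨(unsharedEnum τ).symm ⟨j, hj⟩, ?_⟩⟩
  rw [OrderIso.apply_symm_apply]

theorem cutCode_eq_cases {i : Fin m} (h : cutCode σ i = cutCode τ i) :
    (IsCut σ.1 (unsharedEnum σ i : Fin n) ∧ IsCut τ.1 (unsharedEnum τ i : Fin n) ∧
      (unsharedEnum σ i : Fin n) = unsharedEnum τ i) ∨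
    (¬IsCut σ.1 (unsharedEnum σ i : Fin n) ∧ ¬IsCut τ.1 (unsharedEnum τ i : Fin n) ∧
      ∃ k, σ.1 (unsharedEnum σ i) = unsharedEnum σ k ∧
        τ.1 (unsharedEnum τ i) = unsharedEnum τ k) := by
  unfold cutCode at h
  split_ifs at h with hσ hτ hτ
  · exact .inl ⟨hσ, hτ, Sum.inl.inj h⟩
  · refine .inr ⟨hσ, hτ, _, ?_, congrArg Subtype.val ((unsharedEnum τ).symm_apply_eq.1
      (Sum.inr.inj h).symm)⟩
    rw [OrderIso.apply_symm_apply]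

theorem exists_unsharedEnum_succ_eq {i : Fin m} (h : ¬IsCut τ.1 (unsharedEnum τ i : Fin n)) :
    ∃ k : Fin m, (k : ℕ) + 1 = i ∧ ((unsharedEnum τ k : Fin n) : ℕ) + 1 = unsharedEnum τ i := by
  obtain ⟨p, hp, hpi⟩ := exists_mem_unsharedSteps_succ_eq h
  have hcov : p ⋖ (unsharedEnum τ i : Fin n) := Fin.covBy_iff.2 (Nat.covBy_iff_add_one_eq.2 hpi)
  set k := (unsharedEnum τ).symm ⟨p, hp⟩
  have hk : (unsharedEnum τ k : Fin n) = p := by simp [k]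
  have hki : k ⋖ i :=
    CovBy.of_image ((unsharedEnum τ).toOrderEmbedding.trans (OrderEmbedding.subtype _))
      (by simpa [hk] using hcov)
  exact ⟨k, Nat.covBy_iff_add_one_eq.1 (Fin.covBy_iff.1 hki), by rw [hk, hpi]⟩

theorem unsharedEnum_eq_of_cutCode_eq (h : cutCode σ = cutCode τ) (i : Fin m) :
    (unsharedEnum σ i : Fin n) = unsharedEnum τ i := by
  induction i using WellFoundedLT.induction with
  | _ i ih =>
    obtain ⟨-, -, heq⟩ | ⟨hσ, hτ, -⟩ := cutCode_eq_cases (congrFun h i)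
    · exact heq
    · obtain ⟨k, hki, hk⟩ := exists_unsharedEnum_succ_eq hσ
      obtain ⟨l, hli, hl⟩ := exists_unsharedEnum_succ_eq hτ
      obtain rfl : k = l := by omega
      have := ih k (by omega)
      omega

theorem cutCode_injective :
    Function.Injective (cutCode : {τ : Equiv.Perm (Fin n) // #(unsharedSteps τ) = m} → _) := by
  intro σ τ h
  have henum := unsharedEnum_eq_of_cutCode_eq h
  have hU : unsharedSteps σ.1 = unsharedSteps τ.1 := by
    simpa only [henum, image_unsharedEnum] using (image_unsharedEnum σ).symm
  refine Subtype.ext (perm_eq_of_eqOn_not_isCut hU fun j hj ↦ ?_)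
  obtain ⟨i, hi⟩ := (unsharedEnum σ).surjective ⟨j, hj⟩
  obtain rfl : (unsharedEnum σ i : Fin n) = j := congrArg Subtype.val hi
  obtain ⟨hσ, hτ, -⟩ | ⟨-, -, k, hσ, hτ⟩ := cutCode_eq_cases (congrFun h i)
  · exact .inl ⟨hσ, henum i ▸ hτ⟩
  · exact .inr (by rw [hσ, henum k, ← hτ, henum i])

theorem card_mul_le_sum_pow {α κ R : Type*} [Fintype α] [Fintype κ] [CommSemiring R]
    [PartialOrder R] [IsOrderedRing R] {code : α → Fin m → κ} (hcode : Function.Injective code)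
    {w : κ → R} (hw : ∀ x, 0 ≤ w x) {b : R} (hb : ∀ a, b ≤ ∏ i, w (code a i)) :
    Fintype.card α * b ≤ (∑ x, w x) ^ m := by
  classical
  calc Fintype.card α * b = ∑ _a : α, b := by simp
    _ ≤ ∑ a, ∏ i, w (code a i) := sum_le_sum fun a _ ↦ hb a
    _ = ∑ p ∈ univ.image code, ∏ i, w (p i) := by rw [sum_image hcode.injOn]
    _ ≤ ∑ p : Fin m → κ, ∏ i, w (p i) :=
        sum_le_univ_sum_of_nonneg fun p ↦ prod_nonneg fun i _ ↦ hw _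
    _ = (∑ x, w x) ^ m := (Fintype.sum_pow w m).symm

theorem card_unshared_perm_mul_pow_le (n m : ℕ) {t : ℝ} (ht : 1 ≤ t) :
    Fintype.card {τ : Equiv.Perm (Fin n) // #(unsharedSteps τ) = m} * t ^ m ≤
      (n + m * t ^ 2) ^ m := by
  classical
  let weight : Fin n ⊕ Fin m → ℝ := Sum.elim (fun _ ↦ 1) fun _ ↦ t ^ 2
  have hweight : ∀ x, 0 ≤ weight x := by rintro (_ | _) <;> simp [weight, sq_nonneg]
  have hsum : ∑ x, weight x = n + m * t ^ 2 := by simp [weight]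
  rw [← hsum]
  refine card_mul_le_sum_pow cutCode_injective hweight fun τ ↦ ?_
  have hprod : ∏ i, weight (cutCode τ i) =
      t ^ (2 * #{j ∈ unsharedSteps τ.1 | ¬IsCut τ.1 (j : Fin n)}) := by
    calc ∏ i, weight (cutCode τ i)
        = ∏ i, if ¬IsCut τ.1 (unsharedEnum τ i : Fin n) then t ^ 2 else 1 :=
          prod_congr rfl fun i _ ↦ by unfold cutCode; split_ifs <;> simp_all [weight]
      _ = ∏ j : unsharedSteps τ.1, if ¬IsCut τ.1 (j : Fin n) then t ^ 2 else 1 :=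
          (unsharedEnum τ).toEquiv.prod_comp
            fun j ↦ if ¬IsCut τ.1 (j : Fin n) then t ^ 2 else 1
      _ = t ^ (2 * #{j ∈ unsharedSteps τ.1 | ¬IsCut τ.1 (j : Fin n)}) := by
          rw [prod_coe_sort _ fun j ↦ if ¬IsCut τ.1 (j : Fin n) then t ^ 2 else 1,
            ← prod_filter, prod_const, pow_mul]
  rw [hprod]
  exact pow_le_pow_right₀ ht (τ.2.symm.trans_le (card_unsharedSteps_le_two_mul_card_not_isCut τ.1))

theorem sq_card_unshared_perm_le (hm : m ≤ n) :
    (Fintype.card {τ : Equiv.Perm (Fin n) // #(unsharedSteps τ) = m} : ℝ) ^ 2 ≤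
      (4 * m * n) ^ m := by
  obtain rfl | hm0 := m.eq_zero_or_pos
  · simpa using card_unshared_perm_mul_pow_le n 0 le_rfl
  have hmR : (0 : ℝ) < m := by exact_mod_cast hm0
  have hnR : (0 : ℝ) < n := hmR.trans_le (by exact_mod_cast hm)
  -- This choice balances the two summands of `n + m * t ^ 2`.
  set t : ℝ := √(n / m)
  have htsq : t ^ 2 = n / m := Real.sq_sqrt (by positivity)
  have ht : 1 ≤ t := Real.one_le_sqrt.2 ((one_le_div hmR).2 (by exact_mod_cast hm))
  have hsum : (n + m * t ^ 2 : ℝ) = 2 * n := by rw [htsq]; field_simp; ring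
  have hcard := card_unshared_perm_mul_pow_le n m ht
  rw [hsum] at hcard
  refine le_of_mul_le_mul_right (a := (t ^ m) ^ 2) ?_ (by positivity)
  calc _ = (Fintype.card {τ : Equiv.Perm (Fin n) // #(unsharedSteps τ) = m} * t ^ m) ^ 2 := by ring
    _ ≤ ((2 * n) ^ m) ^ 2 := by gcongr
    _ = (4 * m * n) ^ m * (t ^ m) ^ 2 := by
        rw [← pow_mul, mul_comm m 2, pow_mul, ← pow_mul t, mul_comm m 2, pow_mul t, htsq,
          ← mul_pow]
        congr 1
        field_simp
        ring

end Permutations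

section Shuffles

variable {α β R : Type*} [LinearOrder α] [Fintype α] [Fintype β] [LinearOrder R]

/-- The number of entries preceding `f j` when the sequences `f` and `g` are merged in increasing
order, an entry of `g` equal to `f j` being placed after it. -/
def shuffleRank (f : α → R) (g : β → R) (j : α) : ℕ :=
  #{k | g k < f j} + #{i | i < j}

/-- The set of places taken by the sequence `f` when it is merged with `g` in increasing order. -/
def shuffleCode (f : α → R) (g : β → R) : Finset ℕ :=
  univ.image (shuffleRank f g)

variable {f f' : α → R} {g g' : β → R}

theorem shuffleRank_strictMono (hf : Monotone f) : StrictMono (shuffleRank f g) := by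
  intro i j hij
  refine add_lt_add_of_le_of_lt ?_ ?_
  · exact card_le_card (monotone_filter_right _ fun k _ hk ↦ hk.trans_le (hf hij.le))
  · refine card_lt_card ⟨monotone_filter_right _ fun k _ hk ↦ hk.trans hij, fun hsub ↦ ?_⟩
    simpa using hsub ((mem_filter_univ i).2 hij)

theorem shuffleCode_subset_range (f : α → R) (g : β → R) :
    shuffleCode f g ⊆ range (Fintype.card β + Fintype.card α) := by
  refine image_subset_iff.2 fun j _ ↦ mem_range.2 (add_lt_add_of_le_of_lt (card_le_univ _) ?_)
  exact card_lt_univ_of_notMem (x := j) (by simp)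

theorem shuffleRank_eq_of_shuffleCode_eq (hf : Monotone f) (hf' : Monotone f')
    (h : shuffleCode f g = shuffleCode f' g') : shuffleRank f g = shuffleRank f' g' := by
  refine ((shuffleRank_strictMono hf).range_inj (shuffleRank_strictMono hf')).1 ?_
  simpa [shuffleCode] using congrArg (↑· : Finset ℕ → Set ℕ) h

theorem lt_iff_lt_of_shuffleCode_eq [LinearOrder β] (hf : Monotone f) (hf' : Monotone f')
    (hg : Monotone g) (hg' : Monotone g') (h : shuffleCode f g = shuffleCode f' g')
    (j : α) (k : β) : g k < f j ↔ g' k < f' j := by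
  have hcard : #{k | g k < f j} = #{k | g' k < f' j} :=
    add_right_cancel (congrFun (shuffleRank_eq_of_shuffleCode_eq hf hf' h) j)
  have hlower : ∀ {g : β → R} {r : R}, Monotone g → IsLowerSet {k | g k < r} :=
    fun hg _ _ hba ha ↦ (hg hba).trans_lt ha
  suffices ({k | g k < f j} : Finset β) = ({k | g' k < f' j} : Finset β) by
    simpa using Finset.ext_iff.1 this k
  obtain hsub | hsub := (hlower (r := f j) hg).total (hlower (r := f' j) hg')
  · exact eq_of_subset_of_card_le (monotone_filter_right _ fun k _ hk ↦ hsub hk) hcard.ge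
  · exact (eq_of_subset_of_card_le (monotone_filter_right _ fun k _ hk ↦ hsub hk) hcard.le).symm

end Shuffles

section Chains

variable {α ι R : Type*} {x y : α → ι}

/-- Enumeration of the elements of two chains, without repetition if they only meet at equal
indices. -/
def chainUnion (x y : α → ι) : α ⊕ {j // x j ≠ y j} → ι :=
  Sum.elim x fun j ↦ y j

theorem chainUnion_injective (hx : x.Injective) (hy : y.Injective)
    (hxy : ∀ i j, x i = y j → i = j) : (chainUnion x y).Injective :=
  hx.sumElim (hy.comp Subtype.val_injective) fun i j hij ↦
    j.2 (by obtain rfl := hxy i j hij; exact hij)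

variable [LinearOrder α] [LinearOrder R]

/-- Both chains `x` and `y` carry increasing weights `ω`. -/
def JointlyIncreasing (x y : α → ι) (ω : ι → R) : Prop :=
  StrictMono (ω ∘ x) ∧ StrictMono (ω ∘ y)

variable [Fintype α] [DecidableEq ι] {v v' : ι → R}

/-- The way in which the weights `ω` interleave the two chains where they differ. -/
def chainCode (x y : α → ι) (ω : ι → R) : Finset ℕ :=
  shuffleCode (fun j : {j // x j ≠ y j} ↦ ω (x j)) fun j : {j // x j ≠ y j} ↦ ω (y j)

theorem JointlyIncreasing.lt_iff_lt_of_chainCode_eq (hv : JointlyIncreasing x y v)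
    (hv' : JointlyIncreasing x y v') (h : chainCode x y v = chainCode x y v')
    (j k : {j // x j ≠ y j}) : v (y k) < v (x j) ↔ v' (y k) < v' (x j) :=
  lt_iff_lt_of_shuffleCode_eq (hv.1.monotone.comp (Subtype.mono_coe _))
    (hv'.1.monotone.comp (Subtype.mono_coe _)) (hv.2.monotone.comp (Subtype.mono_coe _))
    (hv'.2.monotone.comp (Subtype.mono_coe _)) h j k

theorem JointlyIncreasing.lt_of_chainCode_eq (hv : JointlyIncreasing x y v)
    (hv' : JointlyIncreasing x y v') (hinj : v'.Injective)
    (h : chainCode x y v = chainCode x y v') {a b : α ⊕ {j // x j ≠ y j}}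
    (hab : v (chainUnion x y a) < v (chainUnion x y b)) :
    v' (chainUnion x y a) < v' (chainUnion x y b) := by
  have hcross := hv.lt_iff_lt_of_chainCode_eq hv' h
  have hxx {i j : α} (hij : v (x i) < v (x j)) : v' (x i) < v' (x j) := hv'.1 (hv.1.lt_iff_lt.1 hij)
  have hyy {i j : α} (hij : v (y i) < v (y j)) : v' (y i) < v' (y j) := hv'.2 (hv.2.lt_iff_lt.1 hij)
  rcases a with i | i <;> rcases b with j | j <;> simp only [chainUnion, Sum.elim_inl,
    Sum.elim_inr] at hab ⊢
  · exact hxx hab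
  · by_cases hi : x i = y i
    · exact hi ▸ hyy (hi ▸ hab)
    · refine (not_lt.1 ((hcross ⟨i, hi⟩ j).not.1 hab.not_gt)).lt_of_ne fun heq ↦ ?_
      exact hab.ne (congrArg v (hinj heq))
  · by_cases hj : x j = y j
    · exact hj ▸ hyy (hj ▸ hab)
    · exact (hcross ⟨j, hj⟩ i).1 hab
  · exact hyy hab

theorem equiv_eq_of_forall_lt_imp_lt {A B : Type*} [LinearOrder B] [Finite B] {e e' : A ≃ B}
    (h : ∀ a b, e a < e b → e' a < e' b) : e = e' := by
  have hmono : StrictMono (e.symm.trans e') := fun a b hab ↦ h _ _ (by simpa using hab)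
  have hid : ⇑(e.symm.trans e') = id :=
    (hmono.range_inj strictMono_id).1 (by simp)
  ext a
  simpa using (congrFun hid (e a)).symm

open Classical in
theorem card_jointlyIncreasing_le (hinj : (chainUnion x y).Injective) {ω : ι → R}
    (hω : ω.Injective) :
    #{τ : Equiv.Perm (α ⊕ {j // x j ≠ y j}) |
      JointlyIncreasing x y (ω ∘ τ.viaEmbedding ⟨chainUnion x y, hinj⟩)} ≤
      4 ^ Fintype.card {j // x j ≠ y j} := by
  set e : _ ↪ ι := ⟨chainUnion x y, hinj⟩
  have happly (τ : Equiv.Perm (α ⊕ {j // x j ≠ y j})) (a) :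
      (ω ∘ τ.viaEmbedding e) (chainUnion x y a) = ω (chainUnion x y (τ a)) :=
    congrArg ω (τ.viaEmbedding_apply e a)
  calc _ ≤ #(range (Fintype.card {j // x j ≠ y j} + Fintype.card {j // x j ≠ y j})).powerset := by
        refine card_le_card_of_injOn (fun τ ↦ chainCode x y (ω ∘ τ.viaEmbedding e))
          (fun τ _ ↦ ?_) fun τ hτ τ' hτ' hcode ↦ ?_
        · exact mem_powerset.2 (shuffleCode_subset_range _ _)
        · let := LinearOrder.lift' (ω ∘ chainUnion x y) (hω.comp hinj)
          refine equiv_eq_of_forall_lt_imp_lt fun a b hab ↦ ?_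
          have := (mem_filter.1 hτ).2.lt_of_chainCode_eq (mem_filter.1 hτ').2
            (hω.comp (Equiv.injective _)) hcode (a := a) (b := b)
          rw [happly, happly, happly, happly] at this
          exact this hab
    _ = 4 ^ Fintype.card {j // x j ≠ y j} := by
        rw [card_powerset, card_range, ← two_mul, pow_mul]
        norm_num

end Chains

section Weights

open Classical in
theorem card_mul_measure_le {Ω Ω' G : Type*} [MeasurableSpace Ω] [MeasurableSpace Ω'] [Fintype G]
    {μ : Measure Ω} [IsProbabilityMeasure μ] {ν : Measure Ω'} {f : G → Ω → Ω'}
    (hf : ∀ g, MeasurePreserving (f g) μ ν) {A : Set Ω'} (hA : MeasurableSet A)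
    {b : ℕ} (hb : ∀ᵐ ω ∂μ, #{g | f g ω ∈ A} ≤ b) :
    Fintype.card G * ν A ≤ b := by
  have hpre (g : G) : MeasurableSet (f g ⁻¹' A) := (hf g).measurable hA
  calc Fintype.card G * ν A = ∑ g, μ (f g ⁻¹' A) := by
        simp [(hf _).measure_preimage hA.nullMeasurableSet]
    _ = ∑ g, ∫⁻ ω, (f g ⁻¹' A).indicator 1 ω ∂μ := by simp [hpre]
    _ = ∫⁻ ω, ∑ g, (f g ⁻¹' A).indicator 1 ω ∂μ :=
        (lintegral_finsetSum _ fun g _ ↦ measurable_one.indicator (hpre g)).symm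
    _ ≤ ∫⁻ _, b ∂μ := by
        refine lintegral_mono_ae ?_
        filter_upwards [hb] with ω hω
        simp only [Set.indicator_apply, Set.mem_preimage, Pi.one_apply, sum_boole]
        exact_mod_cast hω
    _ = b := by simp

variable {ι E : Type*} [MeasurableSpace E]

theorem measurePreserving_comp_perm [Fintype ι] (ν : Measure E) [SigmaFinite ν]
    (τ : Equiv.Perm ι) :
    MeasurePreserving (fun ω : ι → E ↦ ω ∘ τ) (.pi fun _ ↦ ν) (.pi fun _ ↦ ν) := by
  convert measurePreserving_piCongrLeft (fun _ : ι ↦ ν) τ.symm using 1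
  ext ω i
  simpa using
    (MeasurableEquiv.piCongrLeft_apply_apply (β := fun _ : ι ↦ E) τ.symm ω (τ i)).symm

theorem ae_ne_of_indepFun [MeasurableEq E] {Ω : Type*} [MeasurableSpace Ω] {P : Measure Ω}
    [IsFiniteMeasure P] {X Y : Ω → E} (h : IndepFun X Y P) (hX : AEMeasurable X P)
    (hY : AEMeasurable Y P) [NullSingletonClass (P.map Y)] : ∀ᵐ ω ∂P, X ω ≠ Y ω := by
  suffices ∀ᵐ z ∂P.map fun ω ↦ (X ω, Y ω), z.1 ≠ z.2 from ae_of_ae_map (hX.prodMk hY) this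
  rw [h.map_prod_eq_prod_map_map hX hY]
  have hdiag : {z : E × E | ¬z.1 ≠ z.2} = Set.diagonal E := by ext; simp
  rw [ae_iff, hdiag, Measure.measure_prod_null measurableSet_diagonal]
  refine .of_forall fun x ↦ ?_
  simp [Set.preimage]

theorem ae_injective_pi [Fintype ι] [MeasurableEq E] (ν : Measure E) [IsProbabilityMeasure ν]
    [NullSingletonClass ν] : ∀ᵐ ω ∂(Measure.pi fun _ : ι ↦ ν), ω.Injective := by
  have hne (i j : ι) (hij : i ≠ j) : ∀ᵐ ω ∂(Measure.pi fun _ : ι ↦ ν), ω i ≠ ω j := by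
    have hlaw : NullSingletonClass ((Measure.pi fun _ : ι ↦ ν).map fun ω ↦ ω j) := by
      rwa [(measurePreserving_eval (fun _ : ι ↦ ν) j).map_eq]
    exact ae_ne_of_indepFun
      ((iIndepFun_pi (μ := fun _ : ι ↦ ν) (X := fun _ ↦ id) fun _ ↦ aemeasurable_id).indepFun hij)
      (measurable_pi_apply i).aemeasurable (measurable_pi_apply j).aemeasurable
  filter_upwards [ae_all_iff.2 fun i ↦ ae_all_iff.2 fun j ↦ ae_all_iff.2 (hne i j)] with ω hω i j
  exact not_imp_not.1 (hω i j)

variable [TopologicalSpace E] [LinearOrder E] [OrderClosedTopology E] [SecondCountableTopology E]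
  [OpensMeasurableSpace E] {α : Type*}

theorem measurableSet_strictMono_comp [Preorder α] [Countable α] (x : α → ι) :
    MeasurableSet {ω : ι → E | StrictMono (ω ∘ x)} := by
  simp only [StrictMono, Set.ofPred_forall]
  exact .iInter fun i ↦ .iInter fun j ↦ .iInter fun _ ↦
    measurableSet_lt (measurable_pi_apply _) (measurable_pi_apply _)

theorem factorial_mul_measure_jointlyIncreasing_le [Fintype ι] [DecidableEq ι] (ν : Measure E)
    [IsProbabilityMeasure ν] [NullSingletonClass ν] [LinearOrder α] [Fintype α] {x y : α → ι}
    (hinj : (chainUnion x y).Injective) :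
    (Fintype.card α + Fintype.card {j // x j ≠ y j}).factorial *
      (Measure.pi fun _ : ι ↦ ν) {ω | JointlyIncreasing x y ω} ≤
      4 ^ Fintype.card {j // x j ≠ y j} := by
  classical
  have hmeas : MeasurableSet {ω : ι → E | JointlyIncreasing x y ω} :=
    (measurableSet_strictMono_comp x).inter (measurableSet_strictMono_comp y)
  have hcount := card_mul_measure_le (fun τ ↦ measurePreserving_comp_perm ν
      (Equiv.Perm.viaEmbedding τ ⟨chainUnion x y, hinj⟩)) hmeas
    ((ae_injective_pi ν).mono fun ω hω ↦ card_jointlyIncreasing_le hinj hω)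
  rw [Fintype.card_perm, Fintype.card_sum] at hcount
  exact_mod_cast hcount

end Weights

section Pairs

variable {n : ℕ} {σ σ' : Equiv.Perm (Fin n)}

theorem pathEdge_injective (σ : Equiv.Perm (Fin n)) : (pathEdge n σ).Injective :=
  fun _ _ h ↦ σ.injective (Prod.ext_iff.1 h).2

theorem card_initSeg (σ : Equiv.Perm (Fin n)) (j : Fin n) : #(initSeg n σ j) = j := by
  rw [initSeg, card_image_of_injective _ σ.injective, filter_gt_eq_Iio, Fin.card_Iio]

theorem eq_of_pathEdge_eq {i j : Fin n} (h : pathEdge n σ i = pathEdge n σ' j) : i = j := by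
  have hcard := congrArg card (Prod.ext_iff.1 h).1
  simp only [pathEdge, card_initSeg] at hcard
  exact Fin.ext hcard

theorem pairProb_le {m : ℕ} (hm : #(sharedSteps n σ σ')ᶜ = m) :
    pairProb n σ σ' ≤ 4 ^ m / (n + m).factorial := by
  have : IsProbabilityMeasure ((volume : Measure ℝ).restrict (Set.Icc 0 1)) := ⟨by simp⟩
  have hcard : Fintype.card {j // pathEdge n σ j ≠ pathEdge n σ' j} = m := by
    rw [Fintype.card_subtype, ← hm, sharedSteps, compl_filter]
  have hle := factorial_mul_measure_jointlyIncreasing_le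
    ((volume : Measure ℝ).restrict (Set.Icc 0 1)) (chainUnion_injective
      (pathEdge_injective σ) (pathEdge_injective σ') fun _ _ ↦ eq_of_pathEdge_eq)
  rw [hcard, Fintype.card_fin] at hle
  rw [le_div_iff₀' (by positivity)]
  simpa [pairProb, cubeMeasure, Accessible, JointlyIncreasing, Function.comp_def] using
    ENNReal.toReal_mono (by finiteness) hle

theorem pairProb_nonneg (σ σ' : Equiv.Perm (Fin n)) : 0 ≤ pairProb n σ σ' :=
  ENNReal.toReal_nonneg

theorem c_nonneg (n s g : ℕ) : 0 ≤ c n s g :=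
  sum_nonneg fun _ _ ↦ pairProb_nonneg _ _

theorem pathEdge_mul (σ τ : Equiv.Perm (Fin n)) (j : Fin n) :
    pathEdge n (σ * τ) j = Prod.map (image σ) σ (pathEdge n τ j) := by
  simp [pathEdge, initSeg, image_image]

theorem sharedSteps_mul_left (σ τ τ' : Equiv.Perm (Fin n)) :
    sharedSteps n (σ * τ) (σ * τ') = sharedSteps n τ τ' := by
  have hinj : (Prod.map (image σ) σ).Injective := (image_injective σ.injective).prodMap σ.injective
  simp [sharedSteps, pathEdge_mul, hinj.eq_iff]

theorem card_unshared_pairs_eq (n m : ℕ) :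
    #{p : Equiv.Perm (Fin n) × Equiv.Perm (Fin n) | #(sharedSteps n p.1 p.2)ᶜ = m} =
      n.factorial * Fintype.card {τ : Equiv.Perm (Fin n) // #(unsharedSteps τ) = m} := by
  have hshared (σ τ : Equiv.Perm (Fin n)) : (sharedSteps n σ (σ * τ))ᶜ = unsharedSteps τ := by
    simpa [unsharedSteps] using congrArg compl (sharedSteps_mul_left σ 1 τ)
  calc _ = #((univ : Finset (Equiv.Perm (Fin n))) ×ˢ
        ({τ | #(unsharedSteps τ) = m} : Finset (Equiv.Perm (Fin n)))) := by
        refine card_nbij' (fun p ↦ (p.1, p.1⁻¹ * p.2)) (fun p ↦ (p.1, p.1 * p.2)) ?_ ?_ ?_ ?_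
        · intro p hp
          simpa [← hshared p.1] using hp
        · intro p hp
          simpa [hshared] using hp
        · simp [Set.LeftInvOn]
        · simp [Set.LeftInvOn]
    _ = _ := by rw [card_product, card_univ, Fintype.card_perm, Fintype.card_fin,
        Fintype.card_subtype]

theorem sum_c_le_sum_pairProb (n s : ℕ) (I : Finset ℕ) :
    ∑ g ∈ I, c n s g ≤ ∑ p : Equiv.Perm (Fin n) × Equiv.Perm (Fin n) with
      #(sharedSteps n p.1 p.2) = s, pairProb n p.1 p.2 := by
  simp_rw [c, ← filter_filter]
  rw [sum_fiberwise_eq_sum_filter]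
  exact sum_le_sum_of_subset_of_nonneg (filter_subset _ _) fun p _ _ ↦ pairProb_nonneg _ _

theorem sum_c_le {m : ℕ} (hm : m ≤ n) (I : Finset ℕ) :
    ∑ g ∈ I, c n (n - m) g ≤
      n.factorial * Fintype.card {τ : Equiv.Perm (Fin n) // #(unsharedSteps τ) = m} *
        (4 ^ m / (n + m).factorial) := by
  have hiff (p : Equiv.Perm (Fin n) × Equiv.Perm (Fin n)) :
      #(sharedSteps n p.1 p.2) = n - m ↔ #(sharedSteps n p.1 p.2)ᶜ = m := by
    have := card_add_card_compl (sharedSteps n p.1 p.2)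
    rw [Fintype.card_fin] at this
    omega
  refine (sum_c_le_sum_pairProb n (n - m) I).trans ?_
  simp_rw [hiff]
  refine (sum_le_card_nsmul _ _ _ fun p hp ↦ pairProb_le (mem_filter.1 hp).2).trans_eq ?_
  rw [card_unshared_pairs_eq, nsmul_eq_mul, Nat.cast_mul]

end Pairs

section Summation

variable {n m : ℕ}

theorem sq_sum_c_le (hn : 0 < n) (hm : m ≤ n) (I : Finset ℕ) :
    (∑ g ∈ I, c n (n - m) g) ^ 2 ≤ (64 * (m / n)) ^ m := by
  set N := Fintype.card {τ : Equiv.Perm (Fin n) // #(unsharedSteps τ) = m}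
  have hfac : (n.factorial * n ^ m : ℝ) ≤ (n + m).factorial := by
    exact_mod_cast (Nat.mul_le_mul_left _ (Nat.pow_le_pow_left n.le_succ m)).trans
      Nat.factorial_mul_pow_le_factorial
  have hsum : ∑ g ∈ I, c n (n - m) g ≤ N * (4 / n) ^ m := by
    calc _ ≤ (n.factorial * N * (4 ^ m / (n + m).factorial) : ℝ) := sum_c_le hm I
      _ ≤ n.factorial * N * (4 ^ m / (n.factorial * n ^ m)) := by gcongr
      _ = N * (4 / n) ^ m := by rw [div_pow]; field_simp
  calc (∑ g ∈ I, c n (n - m) g) ^ 2 ≤ (N * (4 / n) ^ m) ^ 2 :=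
        pow_le_pow_left₀ (sum_nonneg fun _ _ ↦ c_nonneg _ _ _) hsum 2
    _ = (N : ℝ) ^ 2 * ((4 / n) ^ 2) ^ m := by rw [mul_pow, pow_right_comm]
    _ ≤ (4 * m * n) ^ m * ((4 / n) ^ 2) ^ m := by
        gcongr
        exact sq_card_unshared_perm_le hm
    _ = (64 * (m / n)) ^ m := by
        rw [← mul_pow]
        congr 1
        field_simp
        ring

theorem sum_c_le_geometric (hm : 2 ≤ m) (hmn : 100 * m ≤ n) (I : Finset ℕ) :
    ∑ g ∈ I, c n (n - m) g ≤ 100 / n * (m * (4 / 5) ^ m) := by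
  have hn : 0 < n := by omega
  have hratio : (m / n : ℝ) ≤ 1 / 100 := by
    rw [div_le_div_iff₀ (by positivity) (by norm_num)]
    exact_mod_cast (by omega : m * 100 ≤ 1 * n)
  refine le_of_sq_le_sq ?_ (by positivity)
  calc (∑ g ∈ I, c n (n - m) g) ^ 2 ≤ (64 * (m / n)) ^ m := sq_sum_c_le hn (by omega) I
    _ = (64 * (m / n)) ^ 2 * (64 * (m / n)) ^ (m - 2) := by rw [← pow_add, Nat.add_sub_cancel' hm]
    _ ≤ (64 * (m / n)) ^ 2 * ((4 / 5) ^ 2) ^ (m - 2) := by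
        gcongr
        linarith
    _ = (100 / n * (m * (4 / 5) ^ m)) ^ 2 := by
        obtain ⟨k, rfl⟩ := Nat.exists_eq_add_of_le hm
        rw [Nat.add_sub_cancel_left, pow_right_comm, pow_add]
        ring

theorem sum_c_large_shared_le (hn : 2 ≤ n) (I : ℕ → Finset ℕ) :
    ∑ s ∈ Icc ((99 * n + 99) / 100) (n - 2), ∑ g ∈ I s, c n s g ≤
      100 / n * ∑' m : ℕ, (m * (4 / 5 : ℝ) ^ m) := by
  have hsummable : Summable fun m : ℕ ↦ (m * (4 / 5 : ℝ) ^ m) := by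
    simpa using summable_pow_mul_geometric_of_norm_lt_one (R := ℝ) 1 (r := 4 / 5) (by norm_num)
  calc _ ≤ ∑ s ∈ Icc ((99 * n + 99) / 100) (n - 2),
          100 / (n : ℝ) * ((n - s : ℕ) * (4 / 5) ^ (n - s)) := by
        refine sum_le_sum fun s hs ↦ ?_
        rw [mem_Icc] at hs
        have hs' : n - (n - s) = s := by omega
        simpa only [hs'] using
          sum_c_le_geometric (n := n) (m := n - s) (by omega) (by omega) (I s)
    _ = 100 / n * ∑ m ∈ (Icc ((99 * n + 99) / 100) (n - 2)).image (n - ·),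
          (m * (4 / 5 : ℝ) ^ m) := by
        rw [sum_image, mul_sum]
        intro a ha b hb hab
        simp only [coe_Icc, Set.mem_Icc] at ha hb hab
        omega
    _ ≤ _ := by
        gcongr
        exact hsummable.sum_le_tsum _ fun m _ ↦ by positivity

end Summation

end RandomHypercube

open RandomHypercube in
/-- The pair sum over pairs sharing at least `⌈0.99 n⌉` edges vanishes as `n → ∞`. -/
theorem sum_c_large_shared_tendsto_zero :
    Tendsto (fun n : ℕ =>
        ∑ s ∈ Finset.Icc ((99 * n + 99) / 100) (n - 2),
          ∑ g ∈ Finset.Icc 1 (min (s + 1) ((n - s) / 2)), c n s g)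
      atTop (nhds 0) := by
  have hbound : Tendsto (fun n : ℕ ↦ 100 / (n : ℝ) * ∑' m : ℕ, (m * (4 / 5 : ℝ) ^ m))
      atTop (nhds 0) := by
    simpa using (tendsto_const_div_atTop_nhds_zero_nat (100 : ℝ)).mul_const
      (∑' m : ℕ, (m * (4 / 5 : ℝ) ^ m))
  refine squeeze_zero' (.of_forall fun n ↦ ?_) ?_ hbound
  · exact Finset.sum_nonneg fun s _ ↦ Finset.sum_nonneg fun g _ ↦ c_nonneg n s g
  · filter_upwards [eventually_ge_atTop 2] with n hn
    exact sum_c_large_shared_le hn _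
end

section
/- Let w_n denote the number of direct paths from ∅ to [n] in the n-dimensional hypercube that are edge-disjoint from the canonical path π_n. Then there exists a constant C > 0 such that for every n ≥ 1, (1 − C/n) · n! ≤ w_n ≤ n!; in particular w_n / n! → 1 as n → ∞. -/
open MeasureTheory Filter

/-!
A path shares its `j`-th edge with the canonical path exactly when its permutation preserves
how every element compares with `j`, and `j! (n - 1 - j)!` permutations do so. By the union
bound at most `∑ⱼ j! (n - 1 - j)!` paths meet the canonical one; the two extreme terms are
`(n - 1)!` each, the other `n - 2` are at most `(n - 2)!` each, so the sum is at most `3 (n - 1)!`,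
which is `3 / n` of all `n!` paths.
-/

namespace RandomHypercube

open Finset
open scoped Nat

lemma factorial_succ_mul_factorial_succ_le (a b : ℕ) : (a + 1)! * (b + 1)! ≤ (a + b + 1)! :=
  calc (a + 1)! * (b + 1)!
      = (a + 1)! * (1 + 1).ascFactorial b := by
        rw [add_comm b, ← Nat.factorial_mul_ascFactorial 1, Nat.factorial_one, one_mul]
    _ ≤ (a + 1)! * (a + 1 + 1).ascFactorial b :=
        Nat.mul_le_mul_left _ (Nat.ascFactorial_le b (by lia))
    _ = (a + b + 1)! := by rw [Nat.factorial_mul_ascFactorial, add_right_comm]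

lemma sum_antidiagonal_factorial_mul_factorial_le (m : ℕ) :
    ∑ p ∈ antidiagonal m, p.1 ! * p.2 ! ≤ 3 * m ! := by
  rcases m with _ | _ | k
  · simp
  · simp [Nat.sum_antidiagonal_succ]
  have inner : ∑ p ∈ antidiagonal k, (p.1 + 1)! * (p.2 + 1)! ≤ (k + 1) * (k + 1)! := by
    rw [← Nat.card_antidiagonal k, ← smul_eq_mul (#_)]
    refine sum_le_card_nsmul _ _ _ fun p hp => ?_
    rw [Nat.card_antidiagonal, ← mem_antidiagonal.mp hp]
    exact factorial_succ_mul_factorial_succ_le p.1 p.2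
  calc ∑ p ∈ antidiagonal (k + 2), p.1 ! * p.2 !
      = 2 * (k + 2)! + ∑ p ∈ antidiagonal k, (p.1 + 1)! * (p.2 + 1)! := by
        rw [Nat.sum_antidiagonal_succ, Nat.sum_antidiagonal_succ']
        simp only [Nat.factorial_zero, one_mul, mul_one]
        ring
    _ ≤ 2 * (k + 2)! + (k + 1) * (k + 1)! := by gcongr
    _ ≤ 2 * (k + 2)! + (k + 2) * (k + 1)! := by gcongr; lia
    _ = 3 * (k + 2)! := by rw [Nat.factorial_succ (k + 1)]; ring

section LinearOrder

variable {α : Type*} [LinearOrder α]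

lemma cmp_comp_eq_iff {f : α → α} (hf : f.Injective) (a : α) :
    (cmp · a) ∘ f = (cmp · a) ↔ (∀ b, f b < a ↔ b < a) ∧ f a = a := by
  constructor
  · intro h
    have hcmp (b : α) : cmp (f b) a = cmp b a := congrFun h b
    exact ⟨fun b => lt_iff_lt_of_cmp_eq_cmp (hcmp b), (eq_iff_eq_of_cmp_eq_cmp (hcmp a)).2 rfl⟩
  · rintro ⟨hlt, hfix⟩
    funext b
    rcases lt_trichotomy b a with hb | rfl | hb
    · simp only [Function.comp_apply, hb.cmp_eq_lt, ((hlt b).2 hb).cmp_eq_lt]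
    · simp only [Function.comp_apply, hfix]
    · have not_lt : ¬f b < a := fun h => hb.not_gt ((hlt b).1 h)
      have ne : f b ≠ a := fun h => hb.ne' (hf (h.trans hfix.symm))
      have gt : a < f b := lt_of_le_of_ne (le_of_not_gt not_lt) ne.symm
      simp only [Function.comp_apply, hb.cmp_eq_gt, gt.cmp_eq_gt]

lemma card_perm_cmp_comp_eq [Fintype α] [LocallyFiniteOrderBot α] [LocallyFiniteOrderTop α]
    (a : α) :
    #{σ : Equiv.Perm α | (cmp · a) ∘ σ = (cmp · a)} = (#(Iio a))! * (#(Ioi a))! := by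
  have fibre_lt : ({b | cmp b a = .lt} : Finset α) = Iio a := by ext; simp
  have fibre_eq : ({b | cmp b a = .eq} : Finset α) = {a} := by ext; simp
  have fibre_gt : ({b | cmp b a = .gt} : Finset α) = Ioi a := by ext; simp
  have univ_ordering : (univ : Finset Ordering) = {.lt, .eq, .gt} := rfl
  rw [← Fintype.card_subtype, DomMulAct.stabilizer_card]
  simp only [Fintype.card_subtype, univ_ordering, fibre_lt, fibre_eq, fibre_gt, mem_insert,
    mem_singleton, reduceCtorEq, or_self, not_false_eq_true, prod_insert, prod_singleton,
    card_singleton, Nat.factorial_one, one_mul]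

end LinearOrder

lemma mem_sharedSteps_one {n : ℕ} {σ : Equiv.Perm (Fin n)} {j : Fin n} :
    j ∈ sharedSteps n σ 1 ↔ (cmp · j) ∘ σ = (cmp · j) := by
  have initSeg_eq_iff : initSeg n σ j = initSeg n 1 j ↔ ∀ i, σ i < j ↔ i < j := by
    rw [Finset.ext_iff, σ.surjective.forall]
    refine forall_congr' fun i => ?_
    simp only [initSeg, mem_image, mem_filter_univ, σ.injective.eq_iff, exists_eq_right,
      Equiv.Perm.one_apply]
    exact Iff.comm
  simp only [sharedSteps, pathEdge, mem_filter_univ, Prod.mk.injEq, initSeg_eq_iff,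
    Equiv.Perm.one_apply, cmp_comp_eq_iff σ.injective]

lemma card_mem_sharedSteps_one {n : ℕ} (j : Fin n) :
    #{σ : Equiv.Perm (Fin n) | j ∈ sharedSteps n σ 1} = (j : ℕ)! * (n - 1 - j)! := by
  simp only [mem_sharedSteps_one, card_perm_cmp_comp_eq, Fin.card_Iio, Fin.card_Ioi]

lemma w_eq_card (n : ℕ) : w n = #{σ : Equiv.Perm (Fin n) | sharedSteps n σ 1 = ∅} := by
  rw [w, Nat.card_eq_fintype_card, Fintype.card_subtype]

lemma w_add_card_sharedSteps_nonempty (n : ℕ) :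
    w n + #{σ : Equiv.Perm (Fin n) | (sharedSteps n σ 1).Nonempty} = n ! := by
  simp only [w_eq_card, nonempty_iff_ne_empty, ne_eq, card_filter_add_card_filter_not, card_univ,
    Fintype.card_perm, Fintype.card_fin]

lemma w_le_factorial (n : ℕ) : w n ≤ n ! :=
  le_of_add_le_left (w_add_card_sharedSteps_nonempty n).le

lemma card_sharedSteps_nonempty_le (m : ℕ) :
    #{σ : Equiv.Perm (Fin (m + 1)) | (sharedSteps (m + 1) σ 1).Nonempty} ≤ 3 * m ! :=
  calc #{σ : Equiv.Perm (Fin (m + 1)) | (sharedSteps (m + 1) σ 1).Nonempty}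
      = #(univ.biUnion fun j => {σ : Equiv.Perm (Fin (m + 1)) | j ∈ sharedSteps (m + 1) σ 1}) := by
        congr 1
        ext σ
        rw [mem_filter_univ]
        simp only [Finset.Nonempty, mem_filter_univ, mem_biUnion, mem_univ, true_and]
    _ ≤ ∑ j : Fin (m + 1), #{σ | j ∈ sharedSteps (m + 1) σ 1} := card_biUnion_le
    _ = ∑ j : Fin (m + 1), (j : ℕ)! * (m - j)! := by
        simp only [card_mem_sharedSteps_one, add_tsub_cancel_right]
    _ = ∑ p ∈ antidiagonal m, p.1 ! * p.2 ! := by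
        rw [Nat.sum_antidiagonal_eq_sum_range_succ fun a b => a ! * b !, sum_range]
    _ ≤ 3 * m ! := sum_antidiagonal_factorial_mul_factorial_le m

lemma one_sub_three_div_mul_factorial_le_w {n : ℕ} (hn : n ≠ 0) :
    (1 - 3 / (n : ℝ)) * n ! ≤ w n := by
  obtain ⟨m, rfl⟩ := Nat.exists_eq_succ_of_ne_zero hn
  have factorial_le : ((m + 1)! : ℝ) ≤ w (m + 1) + 3 * m ! := by
    exact_mod_cast (w_add_card_sharedSteps_nonempty (m + 1)).ge.trans
      (Nat.add_le_add_left (card_sharedSteps_nonempty_le m) _)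
  calc (1 - 3 / ((m + 1 : ℕ) : ℝ)) * (m + 1)!
      = (m + 1)! - 3 * m ! := by
        rw [Nat.factorial_succ]
        push_cast
        field_simp
    _ ≤ w (m + 1) := sub_le_iff_le_add.2 factorial_le

end RandomHypercube

open RandomHypercube in
/-- The number `w n` of direct paths edge-disjoint from the canonical path satisfies
`(1 - C/n) n! ≤ w n ≤ n!` for some constant `C > 0`; in particular `w n / n! → 1`. -/
theorem w_asymptotics :
    (∃ C : ℝ, 0 < C ∧ ∀ n : ℕ, 1 ≤ n →
      (1 - C / (n : ℝ)) * (n.factorial : ℝ) ≤ (w n : ℝ) ∧ (w n : ℝ) ≤ (n.factorial : ℝ)) ∧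
    Tendsto (fun n : ℕ => (w n : ℝ) / (n.factorial : ℝ)) atTop (nhds 1) := by
  have upper (n : ℕ) : (w n : ℝ) ≤ n.factorial := by exact_mod_cast w_le_factorial n
  have lower (n : ℕ) (hn : 1 ≤ n) : (1 - 3 / (n : ℝ)) * n.factorial ≤ w n :=
    one_sub_three_div_mul_factorial_le_w (Nat.one_le_iff_ne_zero.1 hn)
  refine ⟨⟨3, by norm_num, fun n hn => ⟨lower n hn, upper n⟩⟩, ?_⟩
  have tendsto_lower : Tendsto (fun n : ℕ => 1 - 3 / (n : ℝ)) atTop (nhds 1) := by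
    simpa using tendsto_const_nhds.sub (tendsto_const_div_atTop_nhds_zero_nat (3 : ℝ))
  refine tendsto_of_tendsto_of_tendsto_of_le_of_le' tendsto_lower tendsto_const_nhds ?_ ?_
  · filter_upwards [eventually_ge_atTop 1] with n hn
    exact (le_div_iff₀ (by positivity)).2 (lower n hn)
  · exact .of_forall fun n => div_le_one_of_le₀ (upper n) (by positivity)
end
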